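/- Let f, Δ : [-π,π] → ℝ be continuous functions with f(θ) > 0 for all θ ∈ [-π,π], and define the symmetrized divergence δ(f₁,f₂) := δ_{a/g}(f₁,f₂) + δ_{a/g}(f₂,f₁). Then lim_{ε→0} δ(f, f+εΔ)/ε² = g_f(Δ), where g_f(Δ) := ∫ (Δ/f)² dμ − ( ∫ (Δ/f) dμ )²; that is, the quadratic term of the symmetrized divergence δ(f, f+Δ) in the perturbation Δ coincides (modulo scaling) with the same Riemannian pseudo-metric g_f(Δ) as for δ_{a/g}. -/

import Mathlib

open MeasureTheory Real Filter Topology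

/-- The normalized Lebesgue measure `dθ/(2π)` on `[-π, π]`. -/
noncomputable def μ : Measure ℝ :=
  (ENNReal.ofReal (2 * Real.pi)⁻¹) • (volume.restrict (Set.Icc (-Real.pi) Real.pi))

/-- The arithmetic/geometric divergence between spectral densities. -/
noncomputable def δag (f₁ f₂ : ℝ → ℝ) : ℝ :=
  Real.log (∫ θ, f₁ θ / f₂ θ ∂μ) - ∫ θ, Real.log (f₁ θ / f₂ θ) ∂μ

/-- The Riemannian pseudo-metric at `f` applied to a perturbation `Δ`. -/
noncomputable def gf (f Δ : ℝ → ℝ) : ℝ :=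
  (∫ θ, (Δ θ / f θ) ^ 2 ∂μ) - (∫ θ, Δ θ / f θ ∂μ) ^ 2

/-!
The logarithmic integrals in `δag f g` and `δag g f` cancel, so their sum is `log (E X * E X⁻¹)`
with `X = g / f = 1 + ε u` and `u = Δ / f`. Integrating `(X - E X)² X⁻¹ = X - 2 E X + (E X)² X⁻¹`
gives `E X * E X⁻¹ = 1 + (E X)⁻¹ E[(X - E X)² X⁻¹]`, and `X - E X = ε (u - E u)`, so the excess over
`1` is `ε² Var[u]` to leading order.
-/

open ProbabilityTheory

theorem tendsto_log_div_of_tendsto_sub_one_div {α : Type*} {l : Filter α} {p r : α → ℝ} {q : ℝ}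
    (hp : Tendsto p l (𝓝 1)) (hq : Tendsto (fun x => (p x - 1) / r x) l (𝓝 q)) :
    Tendsto (fun x => log (p x) / r x) l (𝓝 q) := by
  have hlog : HasDerivAt log 1 1 := by simpa using hasDerivAt_log one_ne_zero
  have hslope : Tendsto (dslope log 1) (𝓝 1) (𝓝 1) := by
    simpa only [ContinuousAt, dslope_same, hlog.deriv] using
      continuousAt_dslope_same.2 hlog.differentiableAt
  have hfactor (x : α) : log (p x) / r x = (p x - 1) / r x * dslope log 1 (p x) := by
    rw [← sub_smul_dslope_of_zero log_one (p x), smul_eq_mul, mul_div_right_comm]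
  simpa only [hfactor, mul_one, Function.comp_apply] using hq.mul (hslope.comp hp)

section Integral

variable {Ω : Type*} {mΩ : MeasurableSpace Ω} {ν : Measure Ω} {u v : Ω → ℝ}

theorem eventually_ae_half_le_one_add_mul (hu : MemLp u ⊤ ν) :
    ∀ᶠ ε : ℝ in 𝓝 0, ∀ᵐ ω ∂ν, 1 / 2 ≤ 1 + ε * u ω := by
  have hlim : Tendsto (fun ε : ℝ => |ε| * lpNorm u ⊤ ν) (𝓝 0) (𝓝 0) := by
    simpa using (tendsto_id (α := ℝ) (x := 𝓝 0)).abs.mul_const (lpNorm u ⊤ ν)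
  filter_upwards [hlim.eventually_le_const one_half_pos] with ε hε
  filter_upwards [ae_le_lpNorm_exponent_top hu] with ω hω
  have hprod : |ε * u ω| ≤ 1 / 2 := by
    rw [abs_mul]
    exact (mul_le_mul_of_nonneg_left hω (abs_nonneg ε)).trans hε
  linarith [neg_abs_le (ε * u ω)]

theorem eventually_ae_norm_inv_one_add_mul_le (hu : MemLp u ⊤ ν) :
    ∀ᶠ ε : ℝ in 𝓝 0, ∀ᵐ ω ∂ν, ‖(1 + ε * u ω)⁻¹‖ ≤ 2 := by
  filter_upwards [eventually_ae_half_le_one_add_mul hu] with ε hε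
  filter_upwards [hε] with ω hω
  rw [norm_of_nonneg (by positivity)]
  exact inv_le_of_inv_le₀ two_pos (by simpa using hω)

theorem aestronglyMeasurable_inv_one_add_mul (hu : AEStronglyMeasurable u ν) (ε : ℝ) :
    AEStronglyMeasurable (fun ω => (1 + ε * u ω)⁻¹) ν :=
  ((hu.aemeasurable.const_mul ε).const_add 1).inv.aestronglyMeasurable

theorem tendsto_integral_mul_inv_one_add_mul (hu : MemLp u ⊤ ν) (hv : Integrable v ν) :
    Tendsto (fun ε : ℝ => ∫ ω, v ω * (1 + ε * u ω)⁻¹ ∂ν) (𝓝 0) (𝓝 (∫ ω, v ω ∂ν)) := by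
  refine tendsto_integral_filter_of_dominated_convergence (fun ω => ‖v ω‖ * 2)
    (.of_forall fun ε => hv.1.mul (aestronglyMeasurable_inv_one_add_mul hu.1 ε)) ?_
    (hv.norm.mul_const 2) (.of_forall fun ω => ?_)
  · filter_upwards [eventually_ae_norm_inv_one_add_mul_le hu] with ε hε
    filter_upwards [hε] with ω hω
    rw [norm_mul]
    exact mul_le_mul_of_nonneg_left hω (norm_nonneg _)
  · have hcont : ContinuousAt (fun ε : ℝ => v ω * (1 + ε * u ω)⁻¹) 0 := by
      fun_prop (disch := simp)
    simpa [ContinuousAt] using hcont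

variable [IsProbabilityMeasure ν]

theorem integral_sq_sub_integral_mul_inv {X : Ω → ℝ} (hX : Integrable X ν)
    (hXinv : Integrable (fun ω => (X ω)⁻¹) ν) (hX0 : ∀ᵐ ω ∂ν, X ω ≠ 0) :
    ∫ ω, (X ω - ν[X]) ^ 2 * (X ω)⁻¹ ∂ν = ν[X] * (ν[X] * ∫ ω, (X ω)⁻¹ ∂ν - 1) := by
  have hexpand : (fun ω => (X ω - ν[X]) ^ 2 * (X ω)⁻¹) =ᵐ[ν]
      fun ω => X ω - 2 * ν[X] + ν[X] ^ 2 * (X ω)⁻¹ := by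
    filter_upwards [hX0] with ω hω
    field_simp
    ring
  rw [integral_congr_ae hexpand, integral_add (by fun_prop) (hXinv.const_mul _),
    integral_sub hX (integrable_const _), integral_const, integral_const_mul, probReal_univ,
    one_smul]
  ring

theorem integral_one_add_mul (hu : Integrable u ν) (ε : ℝ) :
    ∫ ω, (1 + ε * u ω) ∂ν = 1 + ε * ν[u] := by
  rw [integral_add (integrable_const _) (hu.const_mul ε), integral_const_mul, integral_const,
    probReal_univ, one_smul]

theorem tendsto_integral_one_add_mul (hu : Integrable u ν) :
    Tendsto (fun ε : ℝ => ∫ ω, (1 + ε * u ω) ∂ν) (𝓝 0) (𝓝 1) := by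
  simp only [integral_one_add_mul hu]
  simpa using (tendsto_id (α := ℝ) (x := 𝓝 0)).mul_const ν[u] |>.const_add 1

theorem tendsto_integral_one_add_mul_mul_integral_inv (hu : MemLp u ⊤ ν) :
    Tendsto (fun ε : ℝ => (∫ ω, (1 + ε * u ω) ∂ν) * ∫ ω, (1 + ε * u ω)⁻¹ ∂ν) (𝓝 0) (𝓝 1) := by
  simpa using (tendsto_integral_one_add_mul (hu.integrable le_top)).mul
    (tendsto_integral_mul_inv_one_add_mul hu (integrable_const (1 : ℝ)))

theorem eventually_integral_one_add_mul_mul_integral_inv_sub_one (hu : MemLp u ⊤ ν) :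
    ∀ᶠ ε : ℝ in 𝓝 0, (∫ ω, (1 + ε * u ω) ∂ν) * (∫ ω, (1 + ε * u ω)⁻¹ ∂ν) - 1 =
      ε ^ 2 * ((∫ ω, (1 + ε * u ω) ∂ν)⁻¹ * ∫ ω, (u ω - ν[u]) ^ 2 * (1 + ε * u ω)⁻¹ ∂ν) := by
  have hint : Integrable u ν := hu.integrable le_top
  filter_upwards [eventually_ae_half_le_one_add_mul hu, eventually_ae_norm_inv_one_add_mul_le hu,
    (tendsto_integral_one_add_mul hint).eventually_ne one_ne_zero] with ε hhalf hinv hmean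
  have hX0 : ∀ᵐ ω ∂ν, 1 + ε * u ω ≠ 0 := hhalf.mono fun ω hω => by positivity
  have hvar := integral_sq_sub_integral_mul_inv ((integrable_const 1).add (hint.const_mul ε))
    (.of_bound (aestronglyMeasurable_inv_one_add_mul hu.1 ε) 2 hinv) hX0
  have hcenter (ω : Ω) : (1 + ε * u ω - ∫ ω, (1 + ε * u ω) ∂ν) ^ 2 * (1 + ε * u ω)⁻¹ =
      ε ^ 2 * ((u ω - ν[u]) ^ 2 * (1 + ε * u ω)⁻¹) := by
    rw [integral_one_add_mul hint]
    ring
  simp only [Pi.add_apply, hcenter, integral_const_mul] at hvar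
  rw [mul_left_comm, hvar, inv_mul_cancel_left₀ hmean]

theorem tendsto_log_integral_mul_integral_inv_div_sq (hu : MemLp u ⊤ ν) :
    Tendsto
      (fun ε : ℝ => log ((∫ ω, (1 + ε * u ω) ∂ν) * ∫ ω, (1 + ε * u ω)⁻¹ ∂ν) / ε ^ 2)
      (𝓝[≠] 0) (𝓝 Var[u; ν]) := by
  have hcentered : MemLp (fun ω => u ω - ν[u]) 2 ν :=
    (hu.mono_exponent le_top).sub (memLp_const _)
  have hlim : Tendsto (fun ε : ℝ => (∫ ω, (1 + ε * u ω) ∂ν)⁻¹ *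
      ∫ ω, (u ω - ν[u]) ^ 2 * (1 + ε * u ω)⁻¹ ∂ν) (𝓝 0) (𝓝 Var[u; ν]) := by
    simpa [variance_eq_integral hu.1.aemeasurable] using
      ((tendsto_integral_one_add_mul (hu.integrable le_top)).inv₀ one_ne_zero).mul
        (tendsto_integral_mul_inv_one_add_mul hu hcentered.integrable_sq)
  refine tendsto_log_div_of_tendsto_sub_one_div
    ((tendsto_integral_one_add_mul_mul_integral_inv hu).mono_left nhdsWithin_le_nhds)
    ((hlim.mono_left nhdsWithin_le_nhds).congr' ?_)
  filter_upwards [self_mem_nhdsWithin, nhdsWithin_le_nhds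
    (eventually_integral_one_add_mul_mul_integral_inv_sub_one hu)] with ε hε hexcess
  rw [hexcess, mul_div_cancel_left₀ _ (pow_ne_zero 2 hε)]

end Integral

instance : IsProbabilityMeasure μ where
  measure_univ := by
    rw [μ, Measure.smul_apply, Measure.restrict_apply_univ, Real.volume_Icc, smul_eq_mul,
      ← ENNReal.ofReal_mul (by positivity), sub_neg_eq_add, ← two_mul,
      inv_mul_cancel₀ two_pi_pos.ne', ENNReal.ofReal_one]

theorem ae_μ_mem_Icc : ∀ᵐ θ ∂μ, θ ∈ Set.Icc (-π) π :=
  Measure.ae_smul_measure (ae_restrict_mem measurableSet_Icc) _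

theorem memLp_top_μ_of_continuousOn {u : ℝ → ℝ} (hu : ContinuousOn u (Set.Icc (-π) π)) :
    MemLp u ⊤ μ := by
  obtain ⟨C, hC⟩ := isCompact_Icc.exists_bound_of_continuousOn hu
  exact memLp_top_of_bound ((hu.aestronglyMeasurable measurableSet_Icc).smul_measure _) C
    (ae_μ_mem_Icc.mono hC)

theorem gf_eq_variance {f Δ : ℝ → ℝ} (h : MemLp (fun θ => Δ θ / f θ) 2 μ) :
    gf f Δ = Var[fun θ => Δ θ / f θ; μ] :=
  (variance_eq_sub h).symm

theorem δag_add_δag_swap {f g : ℝ → ℝ} (h : (∫ θ, g θ / f θ ∂μ) * ∫ θ, f θ / g θ ∂μ ≠ 0) :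
    δag f g + δag g f = log ((∫ θ, g θ / f θ ∂μ) * ∫ θ, f θ / g θ ∂μ) := by
  have hcancel : ∫ θ, log (f θ / g θ) ∂μ = -∫ θ, log (g θ / f θ) ∂μ := by
    simp only [← integral_neg, ← log_inv, inv_div]
  rw [δag, δag, hcancel, log_mul (left_ne_zero_of_mul h) (right_ne_zero_of_mul h)]
  ring

theorem symmetrized_divergence_quadratic_term_general {f Δ : ℝ → ℝ}
    (hf : ∀ᵐ θ ∂μ, f θ ≠ 0) (hΔ : MemLp (fun θ => Δ θ / f θ) ⊤ μ) :
    Tendsto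
      (fun ε : ℝ =>
        (δag f (fun θ => f θ + ε * Δ θ) + δag (fun θ => f θ + ε * Δ θ) f) / ε ^ 2)
      (𝓝[≠] 0) (𝓝 (gf f Δ)) := by
  rw [gf_eq_variance (hΔ.mono_exponent le_top)]
  refine (tendsto_log_integral_mul_integral_inv_div_sq hΔ).congr' ?_
  filter_upwards [nhdsWithin_le_nhds
    ((tendsto_integral_one_add_mul_mul_integral_inv hΔ).eventually_ne one_ne_zero)] with ε hne
  have hratio : (fun θ => (f θ + ε * Δ θ) / f θ) =ᵐ[μ] fun θ => 1 + ε * (Δ θ / f θ) := by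
    filter_upwards [hf] with θ hθ
    rw [add_div, div_self hθ, mul_div_assoc]
  have hratio_inv : (fun θ => f θ / (f θ + ε * Δ θ)) =ᵐ[μ] fun θ => (1 + ε * (Δ θ / f θ))⁻¹ := by
    filter_upwards [hratio] with θ hθ
    rw [← hθ, inv_div]
  rw [← integral_congr_ae hratio, ← integral_congr_ae hratio_inv] at hne ⊢
  rw [δag_add_δag_swap hne]

theorem symmetrized_divergence_quadratic_term (f Δ : ℝ → ℝ)
    (hf : Continuous f) (hΔ : Continuous Δ)
    (hfpos : ∀ θ ∈ Set.Icc (-Real.pi) Real.pi, 0 < f θ) :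
    Tendsto
      (fun ε : ℝ =>
        (δag f (fun θ => f θ + ε * Δ θ) + δag (fun θ => f θ + ε * Δ θ) f) / ε ^ 2)
      (𝓝[≠] 0) (𝓝 (gf f Δ)) :=
  symmetrized_divergence_quadratic_term_general
    (ae_μ_mem_Icc.mono fun θ hθ => (hfpos θ hθ).ne')
    (memLp_top_μ_of_continuousOn
      (hΔ.continuousOn.div hf.continuousOn fun θ hθ => (hfpos θ hθ).ne'))
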